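/- Let d ≥ 5 and λ ∈ ℂ, let y : (0,1) → ℂ be twice differentiable, and define f(ρ) = y(ρ²)/(d−4+3ρ²)² for ρ ∈ (0,1). Then f solves the mode ODE (1−ρ²)f''(ρ) + ((d−1)/ρ − 2(λ+2)ρ)f'(ρ) − ((λ+1)(λ+2) − 24(d−1)(d−4)/(d−4+3ρ²)²)f(ρ) = 0 on (0,1) if and only if y solves the Heun equation y''(x) + (d/(2x) + (2λ+5−d)/(2(x−1)) − 12/(3x+d−4))y'(x) + ((3(λ−3)(λ−2)x + λ(λ+3)(d−4) − 10d + 16)/(4x(x−1)(3x+d−4)))y(x) = 0 on (0,1). -/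

import Mathlib

/-!
Put `g x = y x / (d - 4 + 3 x) ^ 2`, so that `f ρ = g (ρ ^ 2)`. The substitution `x = ρ ^ 2` turns
the mode operator into `4 x (1 - x) g'' + 2 (d - (2 λ + 5) x) g' - (⋯) g`, whose
coefficients are regular except for a double pole of the potential at `3 x = 4 - d`. The exponents
there are `-2` and `3`, so the gauge factor `(d - 4 + 3 x) ^ (-2)` lowers the pole to
a simple one and leaves `4 x (1 - x) (d - 4 + 3 x) ^ (-2)` times the Heun operator.
As this factor does not vanish on `(0, 1)`, the two equations have the same solutions there.
-/

open Set Filter Topology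

section SecondDerivative

variable {𝕜 : Type*} [NontriviallyNormedField 𝕜] {E : Type*} [NormedAddCommGroup E]
  [NormedSpace 𝕜 E]

/-- `f` is differentiable near `x` and its derivative has derivative `f₂` at `x`. This is the
pointwise notion of twice differentiability, with no continuity required of the second
derivative, so it is weaker than `ContDiffAt 𝕜 2 f x`. -/
def HasSecondDerivAt (f : 𝕜 → E) (f₂ : E) (x : 𝕜) : Prop :=
  (∀ᶠ z in 𝓝 x, DifferentiableAt 𝕜 f z) ∧ HasDerivAt (deriv f) f₂ x

namespace HasSecondDerivAt

variable {f f' : 𝕜 → E} {f₂ : E} {x : 𝕜}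

theorem of_eventually_hasDerivAt (hf : ∀ᶠ z in 𝓝 x, HasDerivAt f (f' z) z)
    (hf' : HasDerivAt f' f₂ x) : HasSecondDerivAt f f₂ x :=
  ⟨hf.mono fun _ hz => hz.differentiableAt,
    hf'.congr_of_eventuallyEq (hf.mono fun _ hz => hz.deriv)⟩

theorem of_isOpen {s : Set 𝕜} (hs : IsOpen s)
    (hf : ∀ z ∈ s, DifferentiableAt 𝕜 f z ∧ DifferentiableAt 𝕜 (deriv f) z) (hx : x ∈ s) :
    HasSecondDerivAt f (deriv (deriv f) x) x :=
  ⟨eventually_of_mem (hs.mem_nhds hx) fun z hz => (hf z hz).1, (hf x hx).2.hasDerivAt⟩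

theorem eventually_hasDerivAt (hf : HasSecondDerivAt f f₂ x) :
    ∀ᶠ z in 𝓝 x, HasDerivAt f (deriv f z) z :=
  hf.1.mono fun _ hz => hz.hasDerivAt

theorem hasDerivAt (hf : HasSecondDerivAt f f₂ x) : HasDerivAt f (deriv f x) x :=
  hf.eventually_hasDerivAt.self_of_nhds

theorem iteratedDeriv_two (hf : HasSecondDerivAt f f₂ x) : iteratedDeriv 2 f x = f₂ := by
  rw [iteratedDeriv_succ, iteratedDeriv_one, hf.2.deriv]

theorem mul {𝔸 : Type*} [NormedRing 𝔸] [NormedAlgebra 𝕜 𝔸] {u v : 𝕜 → 𝔸} {u₂ v₂ : 𝔸}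
    (hu : HasSecondDerivAt u u₂ x) (hv : HasSecondDerivAt v v₂ x) :
    HasSecondDerivAt (u * v) (u₂ * v x + 2 * (deriv u x * deriv v x) + u x * v₂) x := by
  refine of_eventually_hasDerivAt (f' := deriv u * v + u * deriv v) ?_ ?_
  · filter_upwards [hu.eventually_hasDerivAt, hv.eventually_hasDerivAt] with z huz hvz
    exact huz.mul hvz
  · exact ((hu.2.mul hv.hasDerivAt).add (hu.hasDerivAt.mul hv.2)).congr_deriv (by noncomm_ring)

theorem scomp {g : 𝕜 → E} {φ : 𝕜 → 𝕜} {g₂ : E} {φ₂ : 𝕜} (hg : HasSecondDerivAt g g₂ (φ x))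
    (hφ : HasSecondDerivAt φ φ₂ x) :
    HasSecondDerivAt (g ∘ φ) (deriv φ x ^ 2 • g₂ + φ₂ • deriv g (φ x)) x := by
  refine of_eventually_hasDerivAt (f' := deriv φ • (deriv g ∘ φ)) ?_ ?_
  · filter_upwards [hφ.eventually_hasDerivAt,
      hφ.hasDerivAt.continuousAt.eventually hg.eventually_hasDerivAt] with z hφz hgz
    exact hgz.scomp z hφz
  · exact (hφ.2.smul (hg.2.scomp x hφ.hasDerivAt)).congr_deriv (by
      rw [smul_smul, ← pow_two, Function.comp_apply])

end HasSecondDerivAt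

end SecondDerivative

theorem hasSecondDerivAt_sq {𝕜 : Type*} [NontriviallyNormedField 𝕜] (x : 𝕜) :
    HasSecondDerivAt (fun t : 𝕜 => t ^ 2) 2 x :=
  .of_eventually_hasDerivAt (f' := fun t => 2 * t)
    (.of_forall fun t => by simpa using hasDerivAt_pow 2 t)
    (by simpa using (hasDerivAt_id x).const_mul (2 : 𝕜))

section AffineZPow

variable {𝕜 : Type*} [NontriviallyNormedField 𝕜] {𝕜' : Type*} [NontriviallyNormedField 𝕜']
  [NormedAlgebra 𝕜 𝕜'] {a b : 𝕜'} {x : 𝕜}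

theorem hasDerivAt_affine_zpow (m : ℤ) (hx : a + b * algebraMap 𝕜 𝕜' x ≠ 0) :
    HasDerivAt (fun t : 𝕜 => (a + b * algebraMap 𝕜 𝕜' t) ^ m)
      (m * b * (a + b * algebraMap 𝕜 𝕜' x) ^ (m - 1)) x := by
  have haffine : HasDerivAt (fun t : 𝕜 => a + b * algebraMap 𝕜 𝕜' t) b x := by
    simpa using ((algebraMapCLM 𝕜 𝕜').hasDerivAt.const_mul b).const_add a
  exact ((hasDerivAt_zpow m _ (.inl hx)).comp x haffine).congr_deriv (by ring)

theorem hasSecondDerivAt_affine_zpow (m : ℤ) (hx : a + b * algebraMap 𝕜 𝕜' x ≠ 0) :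
    HasSecondDerivAt (fun t : 𝕜 => (a + b * algebraMap 𝕜 𝕜' t) ^ m)
      (m * (m - 1) * b ^ 2 * (a + b * algebraMap 𝕜 𝕜' x) ^ (m - 2)) x := by
  have hcont : ContinuousAt (fun t : 𝕜 => a + b * algebraMap 𝕜 𝕜' t) x := by fun_prop
  refine .of_eventually_hasDerivAt
    ((hcont.eventually_ne hx).mono fun t ht => hasDerivAt_affine_zpow m ht)
    (((hasDerivAt_affine_zpow (m - 1) hx).const_mul (m * b)).congr_deriv ?_)
  rw [show m - 1 - 1 = m - 2 by ring]
  push_cast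
  ring

end AffineZPow

section SecondOrderOp

variable {𝕜 : Type*} [NontriviallyNormedField 𝕜] {𝔸 : Type*} [NormedRing 𝔸] [NormedAlgebra 𝕜 𝔸]

/-- The value `a f'' + b f' + c f` at `x` of a linear second-order differential operator. Only the
values `a`, `b`, `c` of the coefficients at `x` matter, so these are elements, not functions. -/
noncomputable def secondOrderOp (a b c : 𝔸) (f : 𝕜 → 𝔸) (x : 𝕜) : 𝔸 :=
  a * iteratedDeriv 2 f x + b * deriv f x + c * f x

variable (a b c : 𝔸) {x : 𝕜}

theorem secondOrderOp_scomp {g : 𝕜 → 𝔸} {φ : 𝕜 → 𝕜} {g₂ : 𝔸} {φ₂ : 𝕜}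
    (hg : HasSecondDerivAt g g₂ (φ x)) (hφ : HasSecondDerivAt φ φ₂ x) :
    secondOrderOp a b c (g ∘ φ) x =
      secondOrderOp (deriv φ x ^ 2 • a) (φ₂ • a + deriv φ x • b) c g (φ x) := by
  have hderiv : deriv (g ∘ φ) x = deriv φ x • deriv g (φ x) :=
    (hg.hasDerivAt.scomp x hφ.hasDerivAt).deriv
  simp only [secondOrderOp, (hg.scomp hφ).iteratedDeriv_two, hg.iteratedDeriv_two, hderiv,
    Function.comp_apply, mul_add, add_mul, mul_smul_comm, smul_mul_assoc, add_assoc]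

theorem secondOrderOp_mul {u y : 𝕜 → 𝔸} {u₂ y₂ : 𝔸} (hu : HasSecondDerivAt u u₂ x)
    (hy : HasSecondDerivAt y y₂ x) :
    secondOrderOp a b c (u * y) x =
      secondOrderOp (a * u x) (2 * a * deriv u x + b * u x)
        (a * u₂ + b * deriv u x + c * u x) y x := by
  have hderiv : deriv (u * y) x = deriv u x * y x + u x * deriv y x :=
    (hu.hasDerivAt.mul hy.hasDerivAt).deriv
  simp only [secondOrderOp, (hu.mul hy).iteratedDeriv_two, hy.iteratedDeriv_two, hderiv,
    Pi.mul_apply]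
  noncomm_ring

end SecondOrderOp

/-- The differential operator of the mode ODE with dimension parameter `d` and spectral parameter
`lam`, applied to `f` at `ρ`. The dimension is allowed to be complex. -/
noncomputable def modeOperator (d lam : ℂ) (f : ℝ → ℂ) (ρ : ℝ) : ℂ :=
  (1 - (ρ : ℂ) ^ 2) * iteratedDeriv 2 f ρ
    + ((d - 1) / (ρ : ℂ) - 2 * (lam + 2) * (ρ : ℂ)) * deriv f ρ
    - ((lam + 1) * (lam + 2) - 24 * (d - 1) * (d - 4) / (d - 4 + 3 * (ρ : ℂ) ^ 2) ^ 2) * f ρ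

/-- The differential operator of the Heun equation to which the mode ODE is reduced, in canonical
form (leading coefficient `1`), applied to `y` at `x`. -/
noncomputable def heunOperator (d lam : ℂ) (y : ℝ → ℂ) (x : ℝ) : ℂ :=
  iteratedDeriv 2 y x
    + (d / (2 * (x : ℂ)) + (2 * lam + 5 - d) / (2 * ((x : ℂ) - 1))
        - 12 / (3 * (x : ℂ) + d - 4)) * deriv y x
    + ((3 * (lam - 3) * (lam - 2) * (x : ℂ) + lam * (lam + 3) * (d - 4) - 10 * d + 16) /
        (4 * (x : ℂ) * ((x : ℂ) - 1) * (3 * (x : ℂ) + d - 4))) * y x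

/-- The factor `(d - 4 + 3 x) ^ (-2)` that relates solutions of the Heun equation to solutions of
the mode ODE in the variable `x = ρ ^ 2`. -/
noncomputable def heunGauge (d : ℂ) (x : ℝ) : ℂ :=
  (d - 4 + 3 * (x : ℂ)) ^ (-2 : ℤ)

section Coefficients

variable {K : Type*} [Field K] [NeZero (2 : K)] {d x : K}

theorem gauged_first_coeff (lam : K) (hx₀ : x ≠ 0) (hx₁ : x ≠ 1) (hx : d - 4 + 3 * x ≠ 0) :
    2 * (4 * x * (1 - x)) * (-6 / (d - 4 + 3 * x) ^ 3)
        + 2 * (d - (2 * lam + 5) * x) * ((d - 4 + 3 * x) ^ 2)⁻¹ =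
      4 * x * (1 - x) * ((d - 4 + 3 * x) ^ 2)⁻¹ *
        (d / (2 * x) + (2 * lam + 5 - d) / (2 * (x - 1)) - 12 / (3 * x + d - 4)) := by
  have hx₁' : x - 1 ≠ 0 := sub_ne_zero.mpr hx₁
  have h2 : (2 : K) ≠ 0 := two_ne_zero
  rw [show 3 * x + d - 4 = d - 4 + 3 * x by ring, show 1 - x = -(x - 1) by ring]
  generalize hD : d - 4 + 3 * x = D at hx ⊢
  field_simp
  rw [← hD]
  ring

theorem gauged_zeroth_coeff (lam : K) (hx₀ : x ≠ 0) (hx₁ : x ≠ 1) (hx : d - 4 + 3 * x ≠ 0) :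
    4 * x * (1 - x) * (54 / (d - 4 + 3 * x) ^ 4)
        + 2 * (d - (2 * lam + 5) * x) * (-6 / (d - 4 + 3 * x) ^ 3)
        + -((lam + 1) * (lam + 2) - 24 * (d - 1) * (d - 4) / (d - 4 + 3 * x) ^ 2) *
          ((d - 4 + 3 * x) ^ 2)⁻¹ =
      4 * x * (1 - x) * ((d - 4 + 3 * x) ^ 2)⁻¹ *
        ((3 * (lam - 3) * (lam - 2) * x + lam * (lam + 3) * (d - 4) - 10 * d + 16) /
          (4 * x * (x - 1) * (3 * x + d - 4))) := by
  have hx₁' : x - 1 ≠ 0 := sub_ne_zero.mpr hx₁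
  have h4 : (4 : K) ≠ 0 := by
    rw [show (4 : K) = 2 * 2 by norm_num]
    exact mul_ne_zero two_ne_zero two_ne_zero
  rw [show 3 * x + d - 4 = d - 4 + 3 * x by ring, show 1 - x = -(x - 1) by ring]
  generalize hD : d - 4 + 3 * x = D at hx ⊢
  field_simp
  rw [← hD]
  ring

end Coefficients

section Reduction

variable {d : ℂ} {x ρ : ℝ}

theorem heunGauge_eq_inv_sq (d : ℂ) (x : ℝ) :
    heunGauge d x = ((d - 4 + 3 * (x : ℂ)) ^ 2)⁻¹ := by
  rw [heunGauge, zpow_neg, zpow_ofNat]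

theorem deriv_heunGauge (hx : d - 4 + 3 * (x : ℂ) ≠ 0) :
    deriv (heunGauge d) x = -6 / (d - 4 + 3 * (x : ℂ)) ^ 3 := by
  have h : HasDerivAt (heunGauge d) _ x := hasDerivAt_affine_zpow (𝕜 := ℝ) (-2) hx
  rw [h.deriv, div_eq_mul_inv, ← zpow_natCast, ← zpow_neg, Complex.coe_algebraMap]
  norm_num

theorem hasSecondDerivAt_heunGauge (hx : d - 4 + 3 * (x : ℂ) ≠ 0) :
    HasSecondDerivAt (heunGauge d) (54 / (d - 4 + 3 * (x : ℂ)) ^ 4) x := by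
  have h : HasSecondDerivAt (heunGauge d) _ x := hasSecondDerivAt_affine_zpow (𝕜 := ℝ) (-2) hx
  convert h using 1
  rw [div_eq_mul_inv, ← zpow_natCast, ← zpow_neg, Complex.coe_algebraMap]
  norm_num

theorem modeOperator_eq_secondOrderOp (d lam : ℂ) (f : ℝ → ℂ) (ρ : ℝ) :
    modeOperator d lam f ρ =
      secondOrderOp (1 - (ρ : ℂ) ^ 2) ((d - 1) / (ρ : ℂ) - 2 * (lam + 2) * (ρ : ℂ))
        (-((lam + 1) * (lam + 2) -
          24 * (d - 1) * (d - 4) / (d - 4 + 3 * (ρ : ℂ) ^ 2) ^ 2)) f ρ := by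
  rw [modeOperator, secondOrderOp, neg_mul, ← sub_eq_add_neg]

theorem modeOperator_comp_sq (lam : ℂ) {g : ℝ → ℂ} {g₂ : ℂ} (hρ : ρ ≠ 0)
    (hg : HasSecondDerivAt g g₂ (ρ ^ 2)) :
    modeOperator d lam (g ∘ fun t => t ^ 2) ρ =
      secondOrderOp (4 * (ρ : ℂ) ^ 2 * (1 - (ρ : ℂ) ^ 2))
        (2 * (d - (2 * lam + 5) * (ρ : ℂ) ^ 2))
        (-((lam + 1) * (lam + 2) -
          24 * (d - 1) * (d - 4) / (d - 4 + 3 * (ρ : ℂ) ^ 2) ^ 2)) g (ρ ^ 2) := by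
  have hρ' : (ρ : ℂ) ≠ 0 := Complex.ofReal_ne_zero.mpr hρ
  have hderiv : deriv (fun t : ℝ => t ^ 2) ρ = 2 * ρ := by simp
  rw [modeOperator_eq_secondOrderOp,
    secondOrderOp_scomp _ _ _ (φ := fun t => t ^ 2) hg (hasSecondDerivAt_sq ρ), hderiv]
  congr 1
  · simp only [Complex.real_smul]
    push_cast
    ring
  · simp only [Complex.real_smul]
    push_cast
    field_simp
    ring

theorem secondOrderOp_heunGauge_mul (lam : ℂ) {y : ℝ → ℂ} {y₂ : ℂ} (hx₀ : x ≠ 0)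
    (hx₁ : x ≠ 1) (hx : d - 4 + 3 * (x : ℂ) ≠ 0) (hy : HasSecondDerivAt y y₂ x) :
    secondOrderOp (4 * (x : ℂ) * (1 - (x : ℂ))) (2 * (d - (2 * lam + 5) * (x : ℂ)))
        (-((lam + 1) * (lam + 2) - 24 * (d - 1) * (d - 4) / (d - 4 + 3 * (x : ℂ)) ^ 2))
        (heunGauge d * y) x =
      4 * (x : ℂ) * (1 - (x : ℂ)) * heunGauge d x * heunOperator d lam y x := by
  have hx₀' : (x : ℂ) ≠ 0 := Complex.ofReal_ne_zero.mpr hx₀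
  have hx₁' : (x : ℂ) ≠ 1 := Complex.ofReal_ne_one.mpr hx₁
  rw [secondOrderOp_mul _ _ _ (hasSecondDerivAt_heunGauge hx) hy, deriv_heunGauge hx,
    heunGauge_eq_inv_sq, gauged_first_coeff lam hx₀' hx₁' hx, gauged_zeroth_coeff lam hx₀' hx₁' hx,
    secondOrderOp, heunOperator]
  ring

theorem modeOperator_eq_mul_heunOperator (lam : ℂ) {f y : ℝ → ℂ} {y₂ : ℂ} (hρ₀ : ρ ≠ 0)
    (hρ₁ : ρ ^ 2 ≠ 1) (hρ : d - 4 + 3 * ((ρ ^ 2 : ℝ) : ℂ) ≠ 0) (hy : HasSecondDerivAt y y₂ (ρ ^ 2))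
    (hf : f =ᶠ[𝓝 ρ] fun t => y (t ^ 2) / (d - 4 + 3 * (t : ℂ) ^ 2) ^ 2) :
    modeOperator d lam f ρ =
      4 * ((ρ ^ 2 : ℝ) : ℂ) * (1 - ((ρ ^ 2 : ℝ) : ℂ)) * heunGauge d (ρ ^ 2) *
        heunOperator d lam y (ρ ^ 2) := by
  have hfg : f =ᶠ[𝓝 ρ] (heunGauge d * y) ∘ fun t => t ^ 2 := hf.trans <| .of_forall fun t => by
    simp [heunGauge_eq_inv_sq, div_eq_inv_mul]
  calc modeOperator d lam f ρ
    _ = modeOperator d lam ((heunGauge d * y) ∘ fun t => t ^ 2) ρ := by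
      simp only [modeOperator, hfg.iteratedDeriv_eq, hfg.deriv_eq, hfg.eq_of_nhds]
    _ = _ := by
      rw [modeOperator_comp_sq lam hρ₀ ((hasSecondDerivAt_heunGauge hρ).mul hy),
        ← Complex.ofReal_pow]
      exact secondOrderOp_heunGauge_mul lam (pow_ne_zero 2 hρ₀) hρ₁ hρ hy

end Reduction

theorem image_sq_Ioo_zero_one : (fun t : ℝ => t ^ 2) '' Ioo 0 1 = Ioo 0 1 := by
  ext x
  constructor
  · rintro ⟨ρ, ⟨hρ₀, hρ₁⟩, rfl⟩
    exact ⟨by positivity, (sq_lt_one_iff₀ hρ₀.le).mpr hρ₁⟩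
  · rintro ⟨hx₀, hx₁⟩
    exact ⟨√x, ⟨Real.sqrt_pos.mpr hx₀, by rwa [Real.sqrt_lt' one_pos, one_pow]⟩,
      Real.sq_sqrt hx₀.le⟩

theorem mode_ODE_to_Heun_general (d lam : ℂ)
    (hd : ∀ x ∈ Ioo (0 : ℝ) 1, d - 4 + 3 * (x : ℂ) ≠ 0) (y : ℝ → ℂ)
    (hy : ∀ x ∈ Ioo (0 : ℝ) 1, DifferentiableAt ℝ y x ∧ DifferentiableAt ℝ (deriv y) x)
    (f : ℝ → ℂ)
    (hf : ∀ ρ ∈ Ioo (0 : ℝ) 1, f ρ = y (ρ ^ 2) / (d - 4 + 3 * (ρ : ℂ) ^ 2) ^ 2) :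
    (∀ ρ ∈ Ioo (0 : ℝ) 1, modeOperator d lam f ρ = 0) ↔
      ∀ x ∈ Ioo (0 : ℝ) 1, heunOperator d lam y x = 0 := by
  conv_rhs => rw [← image_sq_Ioo_zero_one, forall_mem_image]
  refine forall₂_congr fun ρ hρ => ?_
  have hsq : ρ ^ 2 ∈ Ioo (0 : ℝ) 1 := image_sq_Ioo_zero_one ▸ mem_image_of_mem _ hρ
  rw [modeOperator_eq_mul_heunOperator lam hρ.1.ne' hsq.2.ne (hd _ hsq)
    (.of_isOpen isOpen_Ioo hy hsq) (eventually_of_mem (isOpen_Ioo.mem_nhds hρ) hf)]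
  have hx₀ : ((ρ ^ 2 : ℝ) : ℂ) ≠ 0 := Complex.ofReal_ne_zero.mpr hsq.1.ne'
  have hx₁ : 1 - ((ρ ^ 2 : ℝ) : ℂ) ≠ 0 :=
    sub_ne_zero.mpr (Complex.ofReal_ne_one.mpr hsq.2.ne).symm
  have hgauge : heunGauge d (ρ ^ 2) ≠ 0 := zpow_ne_zero _ (hd _ hsq)
  have hfactor : 4 * ((ρ ^ 2 : ℝ) : ℂ) * (1 - ((ρ ^ 2 : ℝ) : ℂ)) * heunGauge d (ρ ^ 2) ≠ 0 :=
    mul_ne_zero (mul_ne_zero (mul_ne_zero (by norm_num) hx₀) hx₁) hgauge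
  exact mul_eq_zero_iff_left hfactor

theorem natCast_sub_four_add_three_mul_ne_zero {d : ℕ} {x : ℝ} (hd : 4 ≤ d) (hx : 0 < x) :
    (d : ℂ) - 4 + 3 * (x : ℂ) ≠ 0 := by
  have hd' : (4 : ℝ) ≤ d := by exact_mod_cast hd
  have hpos : (d : ℝ) - 4 + 3 * x ≠ 0 := by linarith
  exact_mod_cast hpos

/-- For `d ≥ 5`, `λ ∈ ℂ`, and `y` twice differentiable on `(0,1)`, the function
`f(ρ) = y(ρ²)/(d−4+3ρ²)²` solves the mode ODE on `(0,1)` if and only if `y` solves the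
Heun equation on `(0,1)`. -/
theorem mode_ODE_to_Heun (d : ℕ) (hd : 5 ≤ d) (lam : ℂ) (y : ℝ → ℂ)
    (hy : ∀ x ∈ Set.Ioo (0 : ℝ) 1,
      DifferentiableAt ℝ y x ∧ DifferentiableAt ℝ (deriv y) x)
    (f : ℝ → ℂ)
    (hf : ∀ ρ, f ρ = y (ρ ^ 2) / ((d : ℂ) - 4 + 3 * (ρ : ℂ) ^ 2) ^ 2) :
    (∀ ρ ∈ Set.Ioo (0 : ℝ) 1,
      (1 - (ρ : ℂ) ^ 2) * iteratedDeriv 2 f ρ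
        + (((d : ℂ) - 1) / (ρ : ℂ) - 2 * (lam + 2) * (ρ : ℂ)) * deriv f ρ
        - ((lam + 1) * (lam + 2)
            - 24 * ((d : ℂ) - 1) * ((d : ℂ) - 4) /
                ((d : ℂ) - 4 + 3 * (ρ : ℂ) ^ 2) ^ 2) * f ρ = 0) ↔
    (∀ x ∈ Set.Ioo (0 : ℝ) 1,
      iteratedDeriv 2 y x
        + ((d : ℂ) / (2 * (x : ℂ)) + (2 * lam + 5 - (d : ℂ)) / (2 * ((x : ℂ) - 1))
            - 12 / (3 * (x : ℂ) + (d : ℂ) - 4)) * deriv y x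
        + ((3 * (lam - 3) * (lam - 2) * (x : ℂ)
              + lam * (lam + 3) * ((d : ℂ) - 4) - 10 * (d : ℂ) + 16) /
            (4 * (x : ℂ) * ((x : ℂ) - 1) * (3 * (x : ℂ) + (d : ℂ) - 4))) * y x = 0) := by
  exact mode_ODE_to_Heun_general d lam
    (fun x hx => natCast_sub_four_add_three_mul_ne_zero (by lia) hx.1) y hy f fun ρ _ => hf ρ
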